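/- Let k be a field and G a finite subgroup of GL_n(k) acting on S = k[x_1,…,x_n] by linear substitutions of the variables. Assume the invariant subalgebra S^G is a polynomial algebra, i.e., generated as a k-algebra by finitely many algebraically independent homogeneous elements of positive degree. Then there exists a polynomial p(t) ∈ ℤ[t] such that Hilb(S_G, t) = p(t)·Hilb(S^G, t) as an identity in ℤ[[t]]. -/

import Mathlib

open Finset Matrix MvPolynomial

/-- The action of a matrix `g` on `k[x_1,…,x_n]` by linear substitution of the variables:
`x_i ↦ Σ_j g_{ij} x_j`. -/
noncomputable def lsub {n : ℕ} {k : Type} [Field k] (g : Matrix (Fin n) (Fin n) k) :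
    MvPolynomial (Fin n) k →ₐ[k] MvPolynomial (Fin n) k :=
  MvPolynomial.aeval fun i => ∑ j, MvPolynomial.C (g i j) * MvPolynomial.X j

/-- The span of `{g(f) − f : g ∈ G, f ∈ S}`, whose quotient is the `G`-cofixed space `S_G`. -/
noncomputable def cofixSpan {n : ℕ} (k : Type) [Field k] (G : Subgroup (GL (Fin n) k)) :
    Submodule k (MvPolynomial (Fin n) k) :=
  Submodule.span k
    {h | ∃ g ∈ G, ∃ f : MvPolynomial (Fin n) k,
      h = lsub ((g : GL (Fin n) k) : Matrix (Fin n) (Fin n) k) f - f}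

/-- The submodule of `G`-invariant polynomials. -/
noncomputable def fixSub {n : ℕ} (k : Type) [Field k] (G : Subgroup (GL (Fin n) k)) :
    Submodule k (MvPolynomial (Fin n) k) :=
  ⨅ g ∈ G,
    LinearMap.ker
      ((lsub ((g : GL (Fin n) k) : Matrix (Fin n) (Fin n) k)).toLinearMap - LinearMap.id)


namespace HilbAux

variable {n : ℕ} {k : Type} [Field k]

/-- A subspace closed under taking homogeneous components. -/
def Hom (U : Submodule k (MvPolynomial (Fin n) k)) : Prop :=
  ∀ x ∈ U, ∀ j, homogeneousComponent j x ∈ U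

/-- Hilbert series of (the graded part of) a subspace. -/
noncomputable def H (U : Submodule k (MvPolynomial (Fin n) k)) : PowerSeries ℤ :=
  PowerSeries.mk fun j =>
    (Module.finrank k (homogeneousSubmodule (Fin n) k j ⊓ U :
      Submodule k (MvPolynomial (Fin n) k)) : ℤ)

instance fdHom (j : ℕ) : FiniteDimensional k (homogeneousSubmodule (Fin n) k j) :=
  Module.Finite.iff_fg.2 (homogeneousSubmodule_fg (Fin n) k j)

instance fdInf (j : ℕ) (U : Submodule k (MvPolynomial (Fin n) k)) :
    FiniteDimensional k (homogeneousSubmodule (Fin n) k j ⊓ U :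
      Submodule k (MvPolynomial (Fin n) k)) :=
  Submodule.finiteDimensional_of_le inf_le_left

lemma comp_mul {a : MvPolynomial (Fin n) k} {d : ℕ} (ha : a.IsHomogeneous d)
    (x : MvPolynomial (Fin n) k) (j : ℕ) :
    homogeneousComponent j (a * x) =
      if d ≤ j then a * homogeneousComponent (j - d) x else 0 := by
  have hi : ∀ i, homogeneousComponent j (a * homogeneousComponent i x)
      = if d + i = j then a * homogeneousComponent i x else 0 := by
    intro i
    have := homogeneousComponent_of_mem (m := j) (n := d + i)
      (p := a * homogeneousComponent i x) (ha.mul (homogeneousComponent_isHomogeneous i x))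
    rw [this]
    simp only [eq_comm]
  conv_lhs => rw [← sum_homogeneousComponent x, Finset.mul_sum, map_sum]
  simp only [hi]
  split_ifs with h
  · by_cases h2 : j - d < x.totalDegree + 1
    · rw [Finset.sum_eq_single (j - d)]
      · rw [if_pos (by omega)]
      · intro b _ hb
        rw [if_neg (by omega)]
      · intro hb
        exact absurd (Finset.mem_range.2 h2) hb
    · rw [homogeneousComponent_eq_zero _ _ (by omega), mul_zero]
      refine Finset.sum_eq_zero fun b hb => if_neg ?_
      have := Finset.mem_range.1 hb
      omega
  · refine Finset.sum_eq_zero fun b hb => if_neg ?_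
    omega

lemma hom_span (s : Set (MvPolynomial (Fin n) k))
    (hs : ∀ x ∈ s, ∀ j, homogeneousComponent j x ∈ Submodule.span k s) :
    Hom (Submodule.span k s) := by
  intro x hx j
  have : Submodule.span k s ≤ (Submodule.span k s).comap (homogeneousComponent j) :=
    Submodule.span_le.2 fun x hx => hs x hx j
  exact this hx

lemma hom_sup {U V : Submodule k (MvPolynomial (Fin n) k)} (hU : Hom U) (hV : Hom V) :
    Hom (U ⊔ V) := by
  intro x hx j
  obtain ⟨u, hu, v, hv, rfl⟩ := Submodule.mem_sup.1 hx
  rw [map_add]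
  exact Submodule.add_mem_sup (hU u hu j) (hV v hv j)

lemma hom_map {L : Submodule k (MvPolynomial (Fin n) k)} (hL : Hom L)
    {a : MvPolynomial (Fin n) k} {d : ℕ} (ha : a.IsHomogeneous d) :
    Hom (L.map (LinearMap.mulLeft k a)) := by
  rintro _ ⟨x, hx, rfl⟩ j
  rw [LinearMap.mulLeft_apply, comp_mul ha]
  split_ifs
  · exact ⟨_, hL x hx _, rfl⟩
  · exact zero_mem _

lemma hom_colon {N L : Submodule k (MvPolynomial (Fin n) k)} (hN : Hom N) (hL : Hom L)
    {a : MvPolynomial (Fin n) k} {d : ℕ} (ha : a.IsHomogeneous d) :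
    Hom (L ⊓ N.comap (LinearMap.mulLeft k a)) := by
  rintro x ⟨hx, hx2⟩ j
  refine ⟨hL x hx j, ?_⟩
  have := hN _ hx2 (j + d)
  rw [LinearMap.mulLeft_apply, comp_mul ha, if_pos (by omega)] at this
  simpa using this

lemma H_key {N L : Submodule k (MvPolynomial (Fin n) k)} (hN : Hom N) (hL : Hom L)
    {a : MvPolynomial (Fin n) k} (a0 : a ≠ 0) {d : ℕ} (ha : a.IsHomogeneous d) :
    H (N ⊔ L.map (LinearMap.mulLeft k a)) =
      H N + PowerSeries.X ^ d * (H L - H (L ⊓ N.comap (LinearMap.mulLeft k a))) := by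
  have inj : Function.Injective (LinearMap.mulLeft k a) := fun x y h =>
    mul_left_cancel₀ a0 h
  have hmap : ∀ W : Submodule k (MvPolynomial (Fin n) k),
      Module.finrank k (W.map (LinearMap.mulLeft k a)) = Module.finrank k W := fun W =>
    (LinearEquiv.finrank_eq (Submodule.equivMapOfInjective _ inj W)).symm
  ext j
  rw [map_add, PowerSeries.coeff_X_pow_mul']
  split_ifs with hj
  · obtain ⟨i, rfl⟩ := Nat.exists_eq_add_of_le' hj
    have e1 : homogeneousSubmodule (Fin n) k (i + d) ⊓ (N ⊔ L.map (LinearMap.mulLeft k a))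
        = (homogeneousSubmodule (Fin n) k (i + d) ⊓ N) ⊔
          (homogeneousSubmodule (Fin n) k i ⊓ L).map (LinearMap.mulLeft k a) := by
      apply le_antisymm
      · rintro x ⟨hx, hx2⟩
        obtain ⟨u, hu, _, ⟨v, hv, rfl⟩, rfl⟩ := Submodule.mem_sup.1 hx2
        have h3 := homogeneousComponent_eq_self hx
        rw [map_add, LinearMap.mulLeft_apply, comp_mul ha, if_pos (by omega)] at h3
        rw [LinearMap.mulLeft_apply, ← h3]
        refine Submodule.add_mem_sup ⟨homogeneousComponent_mem _ _, hN u hu _⟩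
          ⟨_, ⟨homogeneousComponent_mem _ _, hL v hv _⟩, ?_⟩
        simp
      · refine sup_le (inf_le_inf_left _ le_sup_left) ?_
        rintro _ ⟨x, ⟨hx, hx2⟩, rfl⟩
        refine ⟨?_, Submodule.mem_sup_right ⟨x, hx2, rfl⟩⟩
        have := ha.mul hx
        rw [add_comm] at this
        exact this
    have e2 : (homogeneousSubmodule (Fin n) k (i + d) ⊓ N) ⊓
          (homogeneousSubmodule (Fin n) k i ⊓ L).map (LinearMap.mulLeft k a)
        = (homogeneousSubmodule (Fin n) k i ⊓ (L ⊓ N.comap (LinearMap.mulLeft k a))).map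
          (LinearMap.mulLeft k a) := by
      apply le_antisymm
      · rintro _ ⟨⟨_, h2⟩, ⟨x, ⟨hx, hx2⟩, rfl⟩⟩
        exact ⟨x, ⟨hx, hx2, h2⟩, rfl⟩
      · rintro _ ⟨x, ⟨hx, hx2, hx3⟩, rfl⟩
        refine ⟨⟨?_, hx3⟩, ⟨x, ⟨hx, hx2⟩, rfl⟩⟩
        have := ha.mul hx
        rw [add_comm] at this
        exact this
    have := Submodule.finrank_sup_add_finrank_inf_eq (homogeneousSubmodule (Fin n) k (i + d) ⊓ N)
      ((homogeneousSubmodule (Fin n) k i ⊓ L).map (LinearMap.mulLeft k a))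
    rw [← e1, e2, hmap, hmap] at this
    simp only [H, PowerSeries.coeff_mk, map_sub, Nat.add_sub_cancel]
    omega
  · have e1 : homogeneousSubmodule (Fin n) k j ⊓ (N ⊔ L.map (LinearMap.mulLeft k a))
        = homogeneousSubmodule (Fin n) k j ⊓ N := by
      apply le_antisymm
      · rintro x ⟨hx, hx2⟩
        refine ⟨hx, ?_⟩
        obtain ⟨u, hu, _, ⟨v, hv, rfl⟩, rfl⟩ := Submodule.mem_sup.1 hx2
        have h3 := homogeneousComponent_eq_self hx
        rw [map_add, LinearMap.mulLeft_apply, comp_mul ha, if_neg hj, add_zero] at h3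
        rw [LinearMap.mulLeft_apply, ← h3]
        exact hN u hu _
      · exact inf_le_inf_left _ le_sup_left
    simp only [H, PowerSeries.coeff_mk, add_zero]
    rw [e1]

lemma HS {r : ℕ} (f : Fin r → MvPolynomial (Fin n) k) (d : Fin r → ℕ)
    (f0 : ∀ i, f i ≠ 0) (hhom : ∀ i, (f i).IsHomogeneous (d i)) (J : Finset (Fin r)) :
    ∀ N L : Submodule k (MvPolynomial (Fin n) k), Hom N → Hom L → N ≤ L →
      (∀ i ∈ J, ∀ x ∈ N, f i * x ∈ N) → (∀ i ∈ J, ∀ x ∈ L, f i * x ∈ L) →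
      (∀ U : ℕ →o Submodule k (MvPolynomial (Fin n) k),
        (∀ m, N ≤ U m ∧ U m ≤ L ∧ ∀ i ∈ J, ∀ x ∈ U m, f i * x ∈ U m) →
        ∃ m, ∀ m', m ≤ m' → U m = U m') →
      ∃ P : Polynomial ℤ, (∏ i ∈ J, (1 - PowerSeries.X ^ d i)) * (H L - H N) =
        (P : PowerSeries ℤ) := by
  induction J using Finset.induction_on with
  | empty =>
    intro N L hN hL hNL _ _ hC
    let U : ℕ →o Submodule k (MvPolynomial (Fin n) k) :=
      ⟨fun m => N ⊔ ⨆ j ∈ Finset.range m, (homogeneousSubmodule (Fin n) k j ⊓ L), by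
        intro m m' h
        refine sup_le_sup_left (biSup_mono fun j hj => ?_) _
        exact Finset.range_mono h hj⟩
    obtain ⟨m, hm⟩ := hC U (fun m => ⟨le_sup_left,
      sup_le hNL (iSup₂_le fun j _ => inf_le_right), by simp⟩)
    have key : ∀ j, m ≤ j → homogeneousSubmodule (Fin n) k j ⊓ L ≤
        homogeneousSubmodule (Fin n) k j ⊓ N := by
      rintro j hj x hx
      have h1 : x ∈ U (j + 1) :=
        Submodule.mem_sup_right
          ((le_iSup₂ (f := fun i (_ : i ∈ Finset.range (j + 1)) =>
            homogeneousSubmodule (Fin n) k i ⊓ L) j (Finset.mem_range.2 (Nat.lt_succ_self j))) hx)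
      rw [← hm (j + 1) (by omega)] at h1
      refine ⟨hx.1, ?_⟩
      rw [← homogeneousComponent_eq_self hx.1]
      have h2 : U m ≤ N.comap (homogeneousComponent j) := by
        refine sup_le (fun y hy => hN y hy j) (iSup₂_le fun i hi y hy => ?_)
        rw [Submodule.mem_comap, homogeneousComponent_of_mem hy.1, if_neg]
        · exact zero_mem _
        · have := Finset.mem_range.1 hi
          omega
      exact h2 h1
    refine ⟨PowerSeries.trunc m (H L - H N), ?_⟩
    rw [Finset.prod_empty, one_mul]
    ext j
    rw [Polynomial.coeff_coe, PowerSeries.coeff_trunc]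
    split_ifs with hj
    · rfl
    · have := le_antisymm (key j (by omega)) (inf_le_inf_left _ hNL)
      simp only [H, map_sub, PowerSeries.coeff_mk]
      rw [this, sub_self]
  | insert a J haJ ih =>
    intro N L hN hL hNL sN sL hC
    have hmapL : L.map (LinearMap.mulLeft k (f a)) ≤ L := by
      rintro _ ⟨x, hx, rfl⟩
      exact sL a (Finset.mem_insert_self _ _) x hx
    have hNcolon : N ≤ L ⊓ N.comap (LinearMap.mulLeft k (f a)) :=
      le_inf hNL fun x hx => sN a (Finset.mem_insert_self _ _) x hx
    obtain ⟨P1, h1⟩ := ih N (L ⊓ N.comap (LinearMap.mulLeft k (f a))) hN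
      (hom_colon hN hL (hhom a)) hNcolon
      (fun i hi => sN i (Finset.mem_insert_of_mem hi))
      (by
        rintro i hi x ⟨hx, hx2⟩
        refine ⟨sL i (Finset.mem_insert_of_mem hi) x hx, ?_⟩
        have := sN i (Finset.mem_insert_of_mem hi) _ hx2
        rw [LinearMap.mulLeft_apply, mul_left_comm] at this
        exact this)
      (fun U hU => hC U fun m => ⟨(hU m).1, (hU m).2.1.trans inf_le_left, by
        intro i hi x hx
        rcases Finset.mem_insert.1 hi with rfl | hi
        · exact (hU m).1 ((hU m).2.1 hx).2
        · exact (hU m).2.2 i hi x hx⟩)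
    obtain ⟨P2, h2⟩ := ih (N ⊔ L.map (LinearMap.mulLeft k (f a))) L
      (hom_sup hN (hom_map hL (hhom a))) hL (sup_le hNL hmapL)
      (by
        intro i hi x hx
        obtain ⟨u, hu, _, ⟨v, hv, rfl⟩, rfl⟩ := Submodule.mem_sup.1 hx
        rw [mul_add]
        refine Submodule.add_mem_sup (sN i (Finset.mem_insert_of_mem hi) u hu)
          ⟨f i * v, sL i (Finset.mem_insert_of_mem hi) v hv, ?_⟩
        simp only [LinearMap.mulLeft_apply]
        rw [mul_left_comm])
      (fun i hi => sL i (Finset.mem_insert_of_mem hi))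
      (fun U hU => hC U fun m => ⟨le_sup_left.trans (hU m).1, (hU m).2.1, by
        intro i hi x hx
        rcases Finset.mem_insert.1 hi with rfl | hi
        · exact (hU m).1 (Submodule.mem_sup_right ⟨x, (hU m).2.1 hx, rfl⟩)
        · exact (hU m).2.2 i hi x hx⟩)
    refine ⟨P2 - Polynomial.X ^ d a * P1, ?_⟩
    rw [Polynomial.coe_sub, Polynomial.coe_mul, Polynomial.coe_pow, Polynomial.coe_X, ← h1, ← h2,
      H_key hN hL (f0 a) (hhom a), Finset.prod_insert haJ]
    ring

/-- The span of the monomials in the `f i`, `i ∈ J`. -/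
noncomputable def A {r : ℕ} (f : Fin r → MvPolynomial (Fin n) k) (J : Finset (Fin r)) :
    Submodule k (MvPolynomial (Fin n) k) :=
  (restrictSupport k {m : Fin r →₀ ℕ | m.support ⊆ J}).map
    (MvPolynomial.aeval f : MvPolynomial (Fin r) k →ₐ[k] MvPolynomial (Fin n) k).toLinearMap

lemma A_eq_span {r : ℕ} (f : Fin r → MvPolynomial (Fin n) k) (J : Finset (Fin r)) :
    A f J = Submodule.span k {x | ∃ m : Fin r →₀ ℕ, m.support ⊆ J ∧
      x = m.prod fun i e => f i ^ e} := by
  rw [A, restrictSupport_eq_span, Submodule.map_span]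
  congr 1
  ext x
  simp only [Set.mem_image, Set.mem_ofPred_eq, exists_exists_and_eq_and]
  constructor
  · rintro ⟨m, hm, rfl⟩
    exact ⟨m, hm, by rw [AlgHom.toLinearMap_apply, aeval_monomial, map_one, one_mul]⟩
  · rintro ⟨m, hm, rfl⟩
    exact ⟨m, hm, by rw [AlgHom.toLinearMap_apply, aeval_monomial, map_one, one_mul]⟩

lemma A_hom {r : ℕ} (f : Fin r → MvPolynomial (Fin n) k) (d : Fin r → ℕ)
    (hhom : ∀ i, (f i).IsHomogeneous (d i)) (J : Finset (Fin r)) : Hom (A f J) := by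
  rw [A_eq_span]
  apply hom_span
  rintro x ⟨m, hm, rfl⟩ j
  have h : (m.prod fun i e => f i ^ e).IsHomogeneous (∑ i ∈ m.support, d i * m i) :=
    IsHomogeneous.prod _ _ _ fun i _ => (hhom i).pow _
  rw [homogeneousComponent_of_mem h]
  split_ifs
  · exact Submodule.subset_span ⟨m, hm, rfl⟩
  · exact zero_mem _

lemma H_A {r : ℕ} (f : Fin r → MvPolynomial (Fin n) k) (d : Fin r → ℕ)
    (hindep : AlgebraicIndependent k f)
    (hhom : ∀ i, (f i).IsHomogeneous (d i)) (J : Finset (Fin r)) :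
    (∏ i ∈ J, (1 - PowerSeries.X ^ d i)) * H (A f J) = 1 := by
  have f0 : ∀ i, f i ≠ 0 := fun i => hindep.ne_zero i
  induction J using Finset.induction_on with
  | empty =>
    have e : A f ∅ = Submodule.span k {1} := by
      rw [A_eq_span]
      congr 1
      ext x
      simp
    rw [e, Finset.prod_empty, one_mul]
    ext j
    rw [PowerSeries.coeff_one, H, PowerSeries.coeff_mk]
    split_ifs with hj
    · subst hj
      have : homogeneousSubmodule (Fin n) k 0 ⊓ Submodule.span k {1} = Submodule.span k {1} := by
        rw [inf_eq_right, Submodule.span_singleton_le_iff_mem]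
        exact isHomogeneous_one _ _
      rw [this, finrank_span_singleton one_ne_zero, Nat.cast_one]
    · have : homogeneousSubmodule (Fin n) k j ⊓ Submodule.span k {1} = ⊥ := by
        rw [eq_bot_iff]
        rintro x ⟨hx, hx2⟩
        have h1 : x ∈ homogeneousSubmodule (Fin n) k 0 := by
          refine (Submodule.span_singleton_le_iff_mem _ _).2 ?_ hx2
          exact isHomogeneous_one _ _
        have h2 := homogeneousComponent_of_mem (m := j) h1
        rw [if_neg hj, homogeneousComponent_eq_self hx] at h2
        exact h2
      rw [this, finrank_bot, Nat.cast_zero]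
  | insert a J haJ ih =>
    have key := H_key (A_hom f d hhom J) (A_hom f d hhom (insert a J)) (f0 a) (hhom a)
    have e1 : A f J ⊔ (A f (insert a J)).map (LinearMap.mulLeft k (f a)) = A f (insert a J) := by
      apply le_antisymm
      · refine sup_le ?_ ?_
        · rw [A_eq_span, A_eq_span]
          apply Submodule.span_mono
          rintro x ⟨m, hm, rfl⟩
          exact ⟨m, hm.trans (Finset.subset_insert _ _), rfl⟩
        · rw [A_eq_span, Submodule.map_span, Submodule.span_le]
          rintro _ ⟨_, ⟨m, hm, rfl⟩, rfl⟩
          refine Submodule.subset_span ⟨m + Finsupp.single a 1, ?_, ?_⟩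
          · intro i hi
            rcases Finset.mem_union.1 (Finsupp.support_add hi) with h | h
            · exact hm h
            · have := Finsupp.support_single_subset h
              rw [Finset.mem_singleton] at this
              exact Finset.mem_insert.2 (Or.inl this)
          · rw [Finsupp.prod_add_index' (by simp) (by intros; rw [pow_add])]
            simp [mul_comm]
      · conv_lhs => rw [A_eq_span]
        rw [Submodule.span_le]
        rintro x ⟨m, hm, rfl⟩
        by_cases hma : m a = 0
        · refine Submodule.mem_sup_left ?_
          rw [A_eq_span]
          refine Submodule.subset_span ⟨m, ?_, rfl⟩
          intro i hi
          rcases Finset.mem_insert.1 (hm hi) with rfl | h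
          · exact absurd hma (Finsupp.mem_support_iff.1 hi)
          · exact h
        · refine Submodule.mem_sup_right ?_
          rw [A_eq_span]
          have hle : Finsupp.single a 1 ≤ m := by
            rw [Finsupp.single_le_iff]
            omega
          refine ⟨_, Submodule.subset_span ⟨m - Finsupp.single a 1, ?_, rfl⟩, ?_⟩
          · intro i hi
            apply hm
            rw [Finsupp.mem_support_iff] at hi ⊢
            intro h
            apply hi
            simp [h]
          · conv_rhs => rw [← tsub_add_cancel_of_le hle]
            rw [Finsupp.prod_add_index' (by simp) (by intros; rw [pow_add])]
            simp [mul_comm]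
    have e2 : A f (insert a J) ⊓ (A f J).comap (LinearMap.mulLeft k (f a)) = ⊥ := by
      rw [eq_bot_iff]
      rintro _ ⟨⟨p, _, rfl⟩, ⟨q, hq, hpq⟩⟩
      have h1 : q = X a * p := by
        apply hindep
        simpa using hpq
      have : p = 0 := by
        ext m
        rw [coeff_zero]
        by_contra hm
        have h2 : coeff (m + Finsupp.single a 1) q ≠ 0 := by
          rw [h1, mul_comm, coeff_mul_X]
          exact hm
        have h3 := hq (mem_support_iff.2 h2)
        apply haJ
        apply h3
        simp
      simp [this]
    rw [e1, e2] at key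
    have hb : H (⊥ : Submodule k (MvPolynomial (Fin n) k)) = 0 := by
      ext j
      simp [H]
    rw [hb, sub_zero] at key
    rw [Finset.prod_insert haJ]
    linear_combination (∏ i ∈ J, (1 - PowerSeries.X ^ d i)) * key + ih

lemma A_univ {r : ℕ} (f : Fin r → MvPolynomial (Fin n) k) :
    A f Finset.univ = Subalgebra.toSubmodule (Algebra.adjoin k (Set.range f)) := by
  rw [Algebra.adjoin_range_eq_range_aeval, A]
  have : {m : Fin r →₀ ℕ | m.support ⊆ Finset.univ} = Set.univ := by
    ext m
    simp
  rw [this, restrictSupport_univ, Submodule.map_top]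
  rfl

lemma lsub_lsub (g h : Matrix (Fin n) (Fin n) k) (p : MvPolynomial (Fin n) k) :
    lsub h (lsub g p) = lsub (g * h) p := by
  have : (lsub h).comp (lsub g) = lsub (g * h) := by
    apply MvPolynomial.algHom_ext
    intro i
    simp only [lsub, AlgHom.comp_apply, aeval_X, map_sum, map_mul, aeval_C,
      MvPolynomial.algebraMap_eq, Matrix.mul_apply, Finset.sum_mul, Finset.mul_sum, mul_assoc]
    rw [Finset.sum_comm]
  rw [← this]
  rfl

lemma lsub_comp (g : Matrix (Fin n) (Fin n) k) (p : MvPolynomial (Fin n) k) (j : ℕ) :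
    homogeneousComponent j (lsub g p) = lsub g (homogeneousComponent j p) := by
  have hh : ∀ i, (lsub g (homogeneousComponent i p)).IsHomogeneous i := by
    intro i
    have := (homogeneousComponent_isHomogeneous i p).aeval
      (fun i => ∑ j, MvPolynomial.C (g i j) * MvPolynomial.X j : Fin n → MvPolynomial (Fin n) k)
      (n := 1) (fun i => IsHomogeneous.sum _ _ _ fun j _ => by
        simpa using (isHomogeneous_C (Fin n) (g i j)).mul (isHomogeneous_X k j))
    rw [one_mul] at this
    exact this
  have hi : ∀ i, homogeneousComponent j (lsub g (homogeneousComponent i p))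
      = if j = i then lsub g (homogeneousComponent i p) else 0 :=
    fun i => homogeneousComponent_of_mem (hh i)
  conv_lhs => rw [← sum_homogeneousComponent p, map_sum, map_sum]
  simp only [hi]
  rw [Finset.sum_ite_eq]
  split_ifs with h
  · rfl
  · rw [homogeneousComponent_eq_zero, map_zero]
    simpa using h

lemma cofix_hom (G : Subgroup (GL (Fin n) k)) : Hom (cofixSpan k G) := by
  apply hom_span
  rintro _ ⟨g, hg, f, rfl⟩ j
  rw [map_sub, lsub_comp]
  exact Submodule.subset_span ⟨g, hg, _, rfl⟩

lemma cofix_stable (G : Subgroup (GL (Fin n) k)) (a : MvPolynomial (Fin n) k)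
    (ha : ∀ g ∈ G, lsub ((g : GL (Fin n) k) : Matrix (Fin n) (Fin n) k) a = a)
    (x : MvPolynomial (Fin n) k) (hx : x ∈ cofixSpan k G) : a * x ∈ cofixSpan k G := by
  have : cofixSpan k G ≤ (cofixSpan k G).comap (LinearMap.mulLeft k a) := by
    refine Submodule.span_le.2 ?_
    rintro _ ⟨g, hg, f, rfl⟩
    refine Submodule.subset_span ⟨g, hg, a * f, ?_⟩
    rw [map_mul, ha g hg, LinearMap.mulLeft_apply, mul_sub]
  exact this hx

lemma integral (G : Subgroup (GL (Fin n) k)) [Finite G]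
    (R : Subalgebra k (MvPolynomial (Fin n) k))
    (hR : ∀ p : MvPolynomial (Fin n) k,
      (∀ g ∈ G, lsub ((g : GL (Fin n) k) : Matrix (Fin n) (Fin n) k) p = p) → p ∈ R)
    (x : MvPolynomial (Fin n) k) : IsIntegral R x := by
  classical
  have := Fintype.ofFinite G
  let q : Polynomial (MvPolynomial (Fin n) k) :=
    ∏ g : G, (Polynomial.X - Polynomial.C
      (lsub (((g : G) : GL (Fin n) k) : Matrix (Fin n) (Fin n) k) x))
  have hq : q.Monic := Polynomial.monic_prod_of_monic _ _ fun g _ => Polynomial.monic_X_sub_C _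
  have hinv : ∀ h : G, q.map
      (lsub (((h : G) : GL (Fin n) k) : Matrix (Fin n) (Fin n) k)).toRingHom = q := by
    intro h
    simp only [q, Polynomial.map_prod, Polynomial.map_sub, Polynomial.map_X, Polynomial.map_C]
    refine Fintype.prod_equiv (Equiv.mulRight h) _ _ fun g => ?_
    have h1 := lsub_lsub (((g : G) : GL (Fin n) k) : Matrix (Fin n) (Fin n) k)
      (((h : G) : GL (Fin n) k) : Matrix (Fin n) (Fin n) k) x
    simp only [AlgHom.toRingHom_eq_coe, RingHom.coe_coe, h1, Equiv.coe_mulRight,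
      Subgroup.coe_mul, Units.val_mul]
  have hroot : q.eval x = 0 := by
    rw [Polynomial.eval_prod]
    refine Finset.prod_eq_zero (Finset.mem_univ (1 : G)) ?_
    have : lsub (1 : Matrix (Fin n) (Fin n) k) x = x := by
      have : lsub (1 : Matrix (Fin n) (Fin n) k) = AlgHom.id k _ := by
        apply MvPolynomial.algHom_ext
        intro i
        simp [lsub, Matrix.one_apply]
      rw [this]
      rfl
    simp [this]
  have hco : ∀ i, q.coeff i ∈ R := by
    intro i
    apply hR
    intro g hg
    have := congrArg (fun p => Polynomial.coeff p i) (hinv ⟨g, hg⟩)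
    simpa using this
  have hl : q ∈ Polynomial.lifts (algebraMap R (MvPolynomial (Fin n) k)) := by
    rw [Polynomial.lifts_iff_coeff_lifts]
    exact fun i => ⟨⟨_, hco i⟩, rfl⟩
  obtain ⟨Q, hQ, _, hm⟩ := Polynomial.lifts_and_natDegree_eq_and_monic hl hq
  refine ⟨Q, hm, ?_⟩
  rw [Polynomial.eval₂_eq_eval_map, hQ, hroot]

lemma noeth {r : ℕ} (G : Subgroup (GL (Fin n) k)) [Finite G]
    (f : Fin r → MvPolynomial (Fin n) k)
    (hR : ∀ p : MvPolynomial (Fin n) k,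
      (∀ g ∈ G, lsub ((g : GL (Fin n) k) : Matrix (Fin n) (Fin n) k) p = p) →
        p ∈ Algebra.adjoin k (Set.range f)) :
    IsNoetherian (Algebra.adjoin k (Set.range f)) (MvPolynomial (Fin n) k) := by
  have h1 : IsNoetherianRing (Algebra.adjoin k (Set.range f)) :=
    isNoetherianRing_of_fg (Subalgebra.fg_def.2 ⟨_, Set.finite_range f, rfl⟩)
  have h2 : Algebra.IsIntegral (Algebra.adjoin k (Set.range f)) (MvPolynomial (Fin n) k) :=
    ⟨integral G _ hR⟩
  have h3 : Algebra.FiniteType (Algebra.adjoin k (Set.range f)) (MvPolynomial (Fin n) k) :=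
    Algebra.FiniteType.of_restrictScalars_finiteType k _ _
  have h4 := Algebra.IsIntegral.finite (R := Algebra.adjoin k (Set.range f))
    (A := MvPolynomial (Fin n) k)
  exact isNoetherian_of_isNoetherianRing_of_finite _ _

lemma stab {r : ℕ} (f : Fin r → MvPolynomial (Fin n) k)
    [IsNoetherian (Algebra.adjoin k (Set.range f)) (MvPolynomial (Fin n) k)]
    (U : ℕ →o Submodule k (MvPolynomial (Fin n) k))
    (hU : ∀ m, ∀ i, ∀ x ∈ U m, f i * x ∈ U m) : ∃ m, ∀ m', m ≤ m' → U m = U m' := by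
  have hs : ∀ m, ∀ a ∈ Algebra.adjoin k (Set.range f), ∀ x ∈ U m, a * x ∈ U m := by
    intro m a ha
    induction ha using Algebra.adjoin_induction with
    | mem a ha =>
      obtain ⟨i, rfl⟩ := ha
      exact hU m i
    | algebraMap c =>
      intro x hx
      rw [← Algebra.smul_def]
      exact Submodule.smul_mem _ _ hx
    | add a b _ _ h1 h2 =>
      intro x hx
      rw [add_mul]
      exact add_mem (h1 x hx) (h2 x hx)
    | mul a b _ _ h1 h2 =>
      intro x hx
      rw [mul_assoc]
      exact h1 _ (h2 x hx)
  let V : ℕ →o Submodule (Algebra.adjoin k (Set.range f)) (MvPolynomial (Fin n) k) :=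
    ⟨fun m => { (U m).toAddSubmonoid with
        smul_mem' := fun c x hx => hs m c c.2 x hx },
      fun m m' h x hx => U.monotone h hx⟩
  obtain ⟨m, hm⟩ := monotone_stabilizes_iff_noetherian.2 ‹_› V
  refine ⟨m, fun m' h => ?_⟩
  ext x
  exact SetLike.ext_iff.1 (hm m' h) x

end HilbAux

/-- Let `G` be a finite subgroup of `GL_n(k)` acting on `S = k[x_1,…,x_n]` by linear
substitutions, and suppose the invariant ring `S^G` is a polynomial algebra, generated by
finitely many algebraically independent homogeneous elements of positive degree.  Then
`Hilb(S_G,t) = p(t) · Hilb(S^G,t)` for some polynomial `p(t) ∈ ℤ[t]`. -/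
theorem statement7 (n : ℕ) (k : Type) [Field k] (G : Subgroup (GL (Fin n) k)) [Finite G]
    (r : ℕ) (f : Fin r → MvPolynomial (Fin n) k) (d : Fin r → ℕ)
    (hindep : AlgebraicIndependent k f)
    (hhom : ∀ i, (f i).IsHomogeneous (d i))
    (hdpos : ∀ i, 0 < d i)
    (hgen : ∀ p : MvPolynomial (Fin n) k,
      (∀ g ∈ G, lsub ((g : GL (Fin n) k) : Matrix (Fin n) (Fin n) k) p = p) ↔
        p ∈ Algebra.adjoin k (Set.range f)) :
    ∃ P : Polynomial ℤ,
      (PowerSeries.mk fun j =>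
          (Module.finrank k
            (↥(MvPolynomial.homogeneousSubmodule (Fin n) k j) ⧸
              Submodule.comap (MvPolynomial.homogeneousSubmodule (Fin n) k j).subtype
                (cofixSpan k G)) : ℤ))
        = (PowerSeries.mk fun j => P.coeff j) *
            PowerSeries.mk fun j =>
              (Module.finrank k
                (MvPolynomial.homogeneousSubmodule (Fin n) k j ⊓ fixSub k G :
                  Submodule k (MvPolynomial (Fin n) k)) : ℤ) := by
  have f0 : ∀ i, f i ≠ 0 := fun i => hindep.ne_zero i
  have hfinv : ∀ i, ∀ g ∈ G, lsub ((g : GL (Fin n) k) : Matrix (Fin n) (Fin n) k) (f i) = f i :=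
    fun i => (hgen (f i)).2 (Algebra.subset_adjoin ⟨i, rfl⟩)
  have hN := HilbAux.noeth G f fun p => (hgen p).1
  obtain ⟨P, hP⟩ := HilbAux.HS f d f0 hhom Finset.univ (cofixSpan k G) ⊤ (HilbAux.cofix_hom G)
    (fun _ _ _ => Submodule.mem_top) le_top
    (fun i _ => HilbAux.cofix_stable G (f i) (hfinv i)) (fun _ _ _ _ => Submodule.mem_top)
    (fun U hU => HilbAux.stab f U fun m i => (hU m).2.2 i (Finset.mem_univ i))
  have hA := HilbAux.H_A f d hindep hhom Finset.univ
  have hfix : HilbAux.A f Finset.univ = fixSub k G := by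
    rw [HilbAux.A_univ]
    ext p
    rw [Subalgebra.mem_toSubmodule, ← hgen p]
    simp [fixSub, sub_eq_zero]
  rw [hfix] at hA
  refine ⟨P, ?_⟩
  have e1 : (PowerSeries.mk fun j => P.coeff j) = (P : PowerSeries ℤ) := by
    ext j
    simp
  have e2 : (PowerSeries.mk fun j =>
          (Module.finrank k
            (↥(MvPolynomial.homogeneousSubmodule (Fin n) k j) ⧸
              Submodule.comap (MvPolynomial.homogeneousSubmodule (Fin n) k j).subtype
                (cofixSpan k G)) : ℤ)) =
      HilbAux.H (⊤ : Submodule k (MvPolynomial (Fin n) k)) - HilbAux.H (cofixSpan k G) := by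
    ext j
    simp only [HilbAux.H, map_sub, PowerSeries.coeff_mk]
    have h1 := Submodule.finrank_quotient_add_finrank
      (Submodule.comap (MvPolynomial.homogeneousSubmodule (Fin n) k j).subtype (cofixSpan k G))
    have h2 : Module.finrank k (Submodule.comap
        (MvPolynomial.homogeneousSubmodule (Fin n) k j).subtype (cofixSpan k G)) =
        Module.finrank k (MvPolynomial.homogeneousSubmodule (Fin n) k j ⊓ cofixSpan k G :
          Submodule k (MvPolynomial (Fin n) k)) := by
      rw [← Submodule.map_comap_subtype]
      exact LinearEquiv.finrank_eq
        (Submodule.equivMapOfInjective _ (Submodule.injective_subtype _) _)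
    rw [inf_top_eq]
    omega
  rw [e1, e2, ← hP]
  change _ = _ * HilbAux.H (fixSub k G)
  linear_combination -(HilbAux.H (⊤ : Submodule k (MvPolynomial (Fin n) k)) - HilbAux.H (cofixSpan k G)) * hA
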